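/- Spectral inequality for disjoint subsets of the circle: let Γ₁ and Γ₂ be disjoint nonempty open subsets of the unit circle S¹ ⊆ ℝ², neither of which is all of S¹, and for i = 1, 2 let μᵢ = inf { ∫_{S¹} |v′|² dθ / ∫_{S¹} v² dθ : v ∈ H¹(S¹), v ≢ 0, v = 0 on S¹ \ Γᵢ } denote the first Dirichlet eigenvalue of −d²/dθ² on Γᵢ. Then √μ₁ + √μ₂ ≥ 2, with the minimum attained when Γ₁ and Γ₂ are two adjacent complementary arcs of lengths 2πα and 2π(1−α), for which the sum equals 1/(2α) + 1/(2(1−α)) ≥ 2. -/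

import Mathlib

open MeasureTheory Set

noncomputable section

/-- The first Dirichlet eigenvalue of `-d²/dθ²` on a (2π-periodic) subset `Γ` of the circle,
as the infimum of the Rayleigh quotient over `C¹` periodic functions vanishing off `Γ`. -/
def circEigen (Γ : Set ℝ) : ℝ :=
  sInf {t : ℝ | ∃ v : ℝ → ℝ, ContDiff ℝ 1 v ∧ (∀ θ, v (θ + 2 * Real.pi) = v θ) ∧
    (∀ θ, θ ∉ Γ → v θ = 0) ∧ (∫ θ in (0 : ℝ)..(2 * Real.pi), (v θ) ^ 2) ≠ 0 ∧
    t = (∫ θ in (0 : ℝ)..(2 * Real.pi), (deriv v θ) ^ 2) /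
      ∫ θ in (0 : ℝ)..(2 * Real.pi), (v θ) ^ 2}

/-!
For `v` of class `C¹` vanishing at `a` and `b` and `T' = κ` on the support of `v`, Picone's identity
reads `v'² - κ² v² = (v' + κ v tan T)² - κ (v² tan T)'`. Taking
`T x = κ (|supp v ∩ (a, x]| - m / 2)`, where `m` is the measure of the support, keeps `T` inside
`(-π/2, π/2)` for every `κ < π / m`, so `κ² ∫ v² ≤ ∫ v'²` without splitting `supp v` into its
components. On the circle this gives `√μᵢ ≥ π / mᵢ` with `m₁ + m₂ ≤ 2π`, and AM-GM bounds
`√μ₁ + √μ₂` below by `2`.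

For an arc of length `L` the eigenfunction `sin (π x / L)`, extended by zero, is not `C¹`. Its
powers with exponent `p > 1` are, and their Rayleigh quotient is exactly
`p² / (2 p - 1) * (π / L)²`, which tends to `(π / L)²` as `p → 1`.
-/

section PiconeInequality

variable {v T : ℝ → ℝ} {a b κ : ℝ}

lemma hasDerivAt_mul_of_eq_zero {h : ℝ → ℝ} {v' x : ℝ} (hv : HasDerivAt v v' x)
    (hvx : v x = 0) (hh : ContinuousAt h x) : HasDerivAt (fun y => v y * h y) (v' * h x) x := by
  rw [hasDerivAt_iff_tendsto_slope] at hv ⊢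
  refine (hv.mul (hh.tendsto.mono_left nhdsWithin_le_nhds)).congr fun y => ?_
  simp only [slope_def_field, hvx]
  ring

lemma hasDerivAt_tan_mul_sq {v' x : ℝ} (hv : HasDerivAt v v' x) (hcos : Real.cos (T x) ≠ 0)
    (hTc : ContinuousAt T x) (hT : v x ≠ 0 → HasDerivAt T κ x) :
    HasDerivAt (fun y => Real.tan (T y) * v y ^ 2)
      (κ * (1 + Real.tan (T x) ^ 2) * v x ^ 2 + 2 * Real.tan (T x) * v x * v') x := by
  by_cases hvx : v x = 0
  · have htan : ContinuousAt (fun y => Real.tan (T y)) x :=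
      ContinuousAt.comp (f := T) (Real.continuousAt_tan.2 hcos) hTc
    convert hasDerivAt_mul_of_eq_zero hv hvx (htan.mul hv.continuousAt) using 1
    · funext y
      simp only [Pi.mul_apply]
      ring
    · simp [hvx]
  · refine (((Real.hasDerivAt_tan hcos).comp x (hT hvx)).mul (hv.pow 2)).congr_deriv ?_
    simp only [Function.comp_apply, Pi.pow_apply, one_div, ← Real.inv_one_add_tan_sq hcos]
    field_simp
    ring

lemma sq_mul_integral_sq_le_of_phase (hv : ContDiff ℝ 1 v) (hab : a ≤ b) (hva : v a = 0)
    (hvb : v b = 0) (hTc : Continuous T)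
    (hTmem : ∀ x ∈ Icc a b, T x ∈ Ioo (-(Real.pi / 2)) (Real.pi / 2))
    (hT : ∀ x ∈ Ioo a b, v x ≠ 0 → HasDerivAt T κ x) :
    κ ^ 2 * ∫ x in a..b, v x ^ 2 ≤ ∫ x in a..b, deriv v x ^ 2 := by
  have hv' : Continuous (deriv v) := hv.continuous_deriv le_rfl
  have hcos : ∀ x ∈ Icc a b, Real.cos (T x) ≠ 0 := fun x hx =>
    (Real.cos_pos_of_mem_Ioo (hTmem x hx)).ne'
  have htan : ContinuousOn (fun x => Real.tan (T x)) (Icc a b) := fun x hx =>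
    (ContinuousAt.comp (f := T) (Real.continuousAt_tan.2 (hcos x hx))
      hTc.continuousAt).continuousWithinAt
  set G' : ℝ → ℝ := fun x =>
    κ * (1 + Real.tan (T x) ^ 2) * v x ^ 2 + 2 * Real.tan (T x) * v x * deriv v x
  have hGc : ContinuousOn (fun x => Real.tan (T x) * v x ^ 2) (Icc a b) :=
    htan.mul (hv.continuous.pow 2).continuousOn
  have hG'c : ContinuousOn G' (uIcc a b) := by
    have := hv.continuous
    rw [uIcc_of_le hab]
    fun_prop
  have hG'zero : ∫ x in a..b, G' x = 0 := by
    rw [intervalIntegral.integral_eq_sub_of_hasDerivAt_of_le hab hGc (fun x hx =>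
      hasDerivAt_tan_mul_sq (hv.differentiable one_ne_zero x).hasDerivAt
        (hcos x (Ioo_subset_Icc_self hx)) hTc.continuousAt (hT x hx)) hG'c.intervalIntegrable]
    simp [hva, hvb]
  have hsq : IntervalIntegrable (fun x => κ ^ 2 * v x ^ 2) volume a b :=
    ((hv.continuous.pow 2).const_mul _).intervalIntegrable _ _
  calc κ ^ 2 * ∫ x in a..b, v x ^ 2 = ∫ x in a..b, (κ ^ 2 * v x ^ 2 - κ * G' x) := by
        rw [intervalIntegral.integral_sub hsq (hG'c.intervalIntegrable.const_mul κ),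
          intervalIntegral.integral_const_mul, intervalIntegral.integral_const_mul, hG'zero,
          mul_zero, sub_zero]
    _ ≤ ∫ x in a..b, deriv v x ^ 2 := by
        refine intervalIntegral.integral_mono_on hab (hsq.sub (hG'c.intervalIntegrable.const_mul κ))
          ((hv'.pow 2).intervalIntegrable _ _) fun x _ => ?_
        -- The difference of the two sides is the square `(v' + κ v tan T)²`.
        nlinarith [sq_nonneg (deriv v x + κ * Real.tan (T x) * v x)]

end PiconeInequality

section FaberKrahn

lemma volume_inter_Ioc_ne_top (s : Set ℝ) (a b : ℝ) : volume (s ∩ Ioc a b) ≠ ⊤ :=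
  measure_ne_top_of_subset inter_subset_right measure_Ioc_lt_top.ne

lemma intervalIntegrable_indicator_one {U : Set ℝ} (hU : MeasurableSet U) (a b : ℝ) :
    IntervalIntegrable (U.indicator (1 : ℝ → ℝ)) volume a b :=
  ⟨(integrableOn_const measure_Ioc_lt_top.ne).indicator hU,
    (integrableOn_const measure_Ioc_lt_top.ne).indicator hU⟩

lemma integral_indicator_one_eq_volume_real {U : Set ℝ} (hU : MeasurableSet U) {a b : ℝ}
    (hab : a ≤ b) : ∫ x in a..b, U.indicator (1 : ℝ → ℝ) x = volume.real (U ∩ Ioc a b) := by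
  rw [intervalIntegral.integral_of_le hab, integral_indicator_one hU,
    measureReal_restrict_apply hU]

lemma hasDerivAt_integral_indicator_one {U : Set ℝ} (hU : IsOpen U) (a : ℝ) {x : ℝ}
    (hx : x ∈ U) : HasDerivAt (fun y => ∫ t in a..y, U.indicator (1 : ℝ → ℝ) t) 1 x := by
  have hone : U.indicator (1 : ℝ → ℝ) =ᶠ[nhds x] 1 := by
    filter_upwards [hU.mem_nhds hx] with y hy using indicator_of_mem hy _
  have hmeas : StronglyMeasurable (U.indicator (1 : ℝ → ℝ)) :=
    (measurable_one.indicator hU.measurableSet).stronglyMeasurable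
  simpa [hx] using intervalIntegral.integral_hasDerivAt_right
    (intervalIntegrable_indicator_one hU.measurableSet a x) hmeas.stronglyMeasurableAtFilter
    (continuousAt_const.congr hone.symm)

variable {v : ℝ → ℝ} {a b : ℝ}

lemma pi_div_sq_mul_integral_sq_le (hv : ContDiff ℝ 1 v) (hab : a ≤ b) (hva : v a = 0)
    (hvb : v b = 0) {ℓ : ℝ} (hℓ : volume.real (Function.support v ∩ Ioc a b) < ℓ) :
    (Real.pi / ℓ) ^ 2 * ∫ x in a..b, v x ^ 2 ≤ ∫ x in a..b, deriv v x ^ 2 := by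
  have hU : IsOpen (Function.support v) := hv.continuous.isOpen_support
  set S : ℝ → ℝ := fun x => ∫ t in a..x, (Function.support v).indicator (1 : ℝ → ℝ) t with hS
  set m := volume.real (Function.support v ∩ Ioc a b)
  have hint := intervalIntegrable_indicator_one hU.measurableSet
  have hSmem : ∀ x ∈ Icc a b, S x ∈ Icc 0 m := fun x hx => by
    simp only [hS, integral_indicator_one_eq_volume_real hU.measurableSet hx.1]
    exact ⟨measureReal_nonneg, measureReal_mono
      (inter_subset_inter_right _ (Ioc_subset_Ioc_right hx.2)) (volume_inter_Ioc_ne_top _ _ _)⟩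
  have hℓ0 : 0 < ℓ := measureReal_nonneg.trans_lt hℓ
  have hκ : 0 < Real.pi / ℓ := div_pos Real.pi_pos hℓ0
  have hκm : Real.pi / ℓ * m < Real.pi := by
    rw [div_mul_eq_mul_div, div_lt_iff₀ hℓ0]
    exact mul_lt_mul_of_pos_left hℓ Real.pi_pos
  refine sq_mul_integral_sq_le_of_phase (T := fun x => Real.pi / ℓ * (S x - m / 2)) hv hab hva hvb
    (((intervalIntegral.continuous_primitive hint a).sub continuous_const).const_mul _)
    (fun x hx => ?_) fun x _ hx => ?_
  · obtain ⟨h0, h1⟩ := hSmem x hx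
    constructor <;> nlinarith
  · simpa using ((hasDerivAt_integral_indicator_one hU a hx).sub_const (m / 2)).const_mul
      (Real.pi / ℓ)

lemma pi_sq_mul_integral_sq_le (hv : ContDiff ℝ 1 v) (hab : a ≤ b) (hva : v a = 0)
    (hvb : v b = 0) :
    Real.pi ^ 2 * ∫ x in a..b, v x ^ 2 ≤
      volume.real (Function.support v ∩ Ioc a b) ^ 2 * ∫ x in a..b, deriv v x ^ 2 := by
  set m := volume.real (Function.support v ∩ Ioc a b)
  have hlim : Filter.Tendsto (fun ℓ : ℝ => ℓ ^ 2 * ∫ x in a..b, deriv v x ^ 2)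
      (nhdsWithin m (Ioi m)) (nhds (m ^ 2 * ∫ x in a..b, deriv v x ^ 2)) :=
    Continuous.tendsto' (by fun_prop) _ _ rfl |>.mono_left nhdsWithin_le_nhds
  refine ge_of_tendsto hlim ?_
  filter_upwards [self_mem_nhdsWithin] with ℓ hℓ
  have hℓ0 : 0 < ℓ := measureReal_nonneg.trans_lt hℓ
  calc Real.pi ^ 2 * ∫ x in a..b, v x ^ 2
      = ℓ ^ 2 * ((Real.pi / ℓ) ^ 2 * ∫ x in a..b, v x ^ 2) := by field_simp
    _ ≤ ℓ ^ 2 * ∫ x in a..b, deriv v x ^ 2 := by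
        gcongr
        exact pi_div_sq_mul_integral_sq_le hv hab hva hvb hℓ

end FaberKrahn

section DirichletTest

/-- The competitors `v` in the infimum defining `circEigen Γ`, with `Function.Periodic` written
in place of its unfolding. The requirement that `v` is not identically zero is kept separate. -/
structure IsDirichletTest (Γ : Set ℝ) (v : ℝ → ℝ) : Prop where
  contDiff : ContDiff ℝ 1 v
  periodic : Function.Periodic v (2 * Real.pi)
  eq_zero : ∀ θ ∉ Γ, v θ = 0

/-- The Rayleigh quotient of `-d²/dθ²` on the circle of length `2π`. -/
def rayleighQuotient (v : ℝ → ℝ) : ℝ :=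
  (∫ θ in (0 : ℝ)..(2 * Real.pi), (deriv v θ) ^ 2) / ∫ θ in (0 : ℝ)..(2 * Real.pi), (v θ) ^ 2

variable {Γ : Set ℝ} {v : ℝ → ℝ}

lemma IsDirichletTest.mono {Γ' : Set ℝ} (hv : IsDirichletTest Γ v) (h : Γ ⊆ Γ') :
    IsDirichletTest Γ' v :=
  ⟨hv.contDiff, hv.periodic, fun θ hθ => hv.eq_zero θ fun hθ' => hθ (h hθ')⟩

lemma IsDirichletTest.support_subset (hv : IsDirichletTest Γ v) : Function.support v ⊆ Γ :=
  fun θ hθ => by_contra fun hθΓ => hθ (hv.eq_zero θ hθΓ)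

lemma periodic_deriv {T : ℝ} (hv : Function.Periodic v T) : Function.Periodic (deriv v) T :=
  fun θ => by rw [← deriv_comp_add_const, funext hv]

lemma integral_sq_eq_of_periodic {f : ℝ → ℝ} {T : ℝ} (hf : Function.Periodic f T) (c : ℝ) :
    ∫ θ in (0 : ℝ)..T, f θ ^ 2 = ∫ θ in c..(c + T), f θ ^ 2 := by
  simpa using (hf.comp (· ^ 2)).intervalIntegral_add_eq 0 c

lemma circEigen_le_rayleighQuotient (hv : IsDirichletTest Γ v)
    (hv0 : ∫ θ in (0 : ℝ)..(2 * Real.pi), v θ ^ 2 ≠ 0) : circEigen Γ ≤ rayleighQuotient v := by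
  refine csInf_le ⟨0, ?_⟩ ⟨v, hv.contDiff, hv.periodic, hv.eq_zero, hv0, rfl⟩
  rintro _ ⟨w, -, -, -, -, rfl⟩
  have h2π := Real.two_pi_pos.le
  exact div_nonneg (intervalIntegral.integral_nonneg h2π fun _ _ => sq_nonneg _)
    (intervalIntegral.integral_nonneg h2π fun _ _ => sq_nonneg _)

lemma le_circEigen {c : ℝ} (hv : IsDirichletTest Γ v)
    (hv0 : ∫ θ in (0 : ℝ)..(2 * Real.pi), v θ ^ 2 ≠ 0)
    (hc : ∀ w, IsDirichletTest Γ w → c * ∫ θ in (0 : ℝ)..(2 * Real.pi), w θ ^ 2 ≤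
      ∫ θ in (0 : ℝ)..(2 * Real.pi), deriv w θ ^ 2) : c ≤ circEigen Γ := by
  refine le_csInf ⟨_, v, hv.contDiff, hv.periodic, hv.eq_zero, hv0, rfl⟩ ?_
  rintro _ ⟨w, hw, hwp, hwΓ, hw0, rfl⟩
  have hpos : 0 < ∫ θ in (0 : ℝ)..(2 * Real.pi), w θ ^ 2 :=
    (intervalIntegral.integral_nonneg Real.two_pi_pos.le fun _ _ => sq_nonneg _).lt_of_ne' hw0
  exact (le_div_iff₀ hpos).2 (hc w ⟨hw, hwp, hwΓ⟩)

end DirichletTest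

section LowerBound

variable {Γ : Set ℝ} {v : ℝ → ℝ} {c : ℝ}

lemma volume_real_inter_Ioc_add_eq {s : Set ℝ} (hs : MeasurableSet s) {T : ℝ} (hT : 0 < T)
    (hper : Function.Periodic (· ∈ s) T) (t u : ℝ) :
    volume.real (s ∩ Ioc t (t + T)) = volume.real (s ∩ Ioc u (u + T)) := by
  have hind : Function.Periodic (s.indicator (1 : ℝ → ℝ)) T := fun x => by
    by_cases hx : x ∈ s
    · rw [indicator_of_mem hx, indicator_of_mem ((hper x).mpr hx), Pi.one_apply, Pi.one_apply]
    · rw [indicator_of_notMem hx, indicator_of_notMem fun h => hx ((hper x).mp h)]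
  rw [← integral_indicator_one_eq_volume_real hs (by linarith),
    ← integral_indicator_one_eq_volume_real hs (by linarith), hind.intervalIntegral_add_eq t u]

lemma IsDirichletTest.pi_sq_mul_integral_sq_le (hv : IsDirichletTest Γ v) (hc : c ∉ Γ) (t : ℝ) :
    Real.pi ^ 2 * ∫ θ in (0 : ℝ)..(2 * Real.pi), v θ ^ 2 ≤
      volume.real (Γ ∩ Ioc t (t + 2 * Real.pi)) ^ 2 *
        ∫ θ in (0 : ℝ)..(2 * Real.pi), deriv v θ ^ 2 := by
  have h2π := Real.two_pi_pos
  have hsupp : Function.Periodic (· ∈ Function.support v) (2 * Real.pi) := fun θ => by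
    simp only [Function.mem_support, hv.periodic θ]
  have hvol : volume.real (Function.support v ∩ Ioc c (c + 2 * Real.pi)) ≤
      volume.real (Γ ∩ Ioc t (t + 2 * Real.pi)) := by
    rw [volume_real_inter_Ioc_add_eq hv.contDiff.continuous.isOpen_support.measurableSet h2π
      hsupp c t]
    exact measureReal_mono (inter_subset_inter_left _ hv.support_subset)
      (volume_inter_Ioc_ne_top _ _ _)
  have hvc : v c = 0 := hv.eq_zero c hc
  rw [integral_sq_eq_of_periodic hv.periodic c,
    integral_sq_eq_of_periodic (periodic_deriv hv.periodic) c]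
  refine (_root_.pi_sq_mul_integral_sq_le hv.contDiff (by linarith) hvc
    ((hv.periodic c).trans hvc)).trans ?_
  gcongr
  exact intervalIntegral.integral_nonneg (by linarith) fun _ _ => sq_nonneg _

lemma pi_le_sqrt_circEigen_mul_volume (hv : IsDirichletTest Γ v)
    (hv0 : ∫ θ in (0 : ℝ)..(2 * Real.pi), v θ ^ 2 ≠ 0) (hc : c ∉ Γ) (t : ℝ) :
    Real.pi ≤ Real.sqrt (circEigen Γ) * volume.real (Γ ∩ Ioc t (t + 2 * Real.pi)) := by
  set m := volume.real (Γ ∩ Ioc t (t + 2 * Real.pi))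
  have hFK : ∀ w, IsDirichletTest Γ w → Real.pi ^ 2 * ∫ θ in (0 : ℝ)..(2 * Real.pi), w θ ^ 2 ≤
      m ^ 2 * ∫ θ in (0 : ℝ)..(2 * Real.pi), deriv w θ ^ 2 :=
    fun w hw => hw.pi_sq_mul_integral_sq_le hc t
  have hvpos : 0 < ∫ θ in (0 : ℝ)..(2 * Real.pi), v θ ^ 2 :=
    (intervalIntegral.integral_nonneg Real.two_pi_pos.le fun _ _ => sq_nonneg _).lt_of_ne' hv0
  have hmpos : 0 < m := by
    refine lt_of_le_of_ne' measureReal_nonneg fun hm0 : m = 0 => ?_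
    have hzero := hFK v hv
    rw [hm0, zero_pow two_ne_zero, zero_mul] at hzero
    exact hzero.not_gt (mul_pos (pow_pos Real.pi_pos 2) hvpos)
  rw [← div_le_iff₀ hmpos]
  refine Real.le_sqrt_of_sq_le (le_circEigen hv hv0 fun w hw => ?_)
  rw [div_pow, div_mul_eq_mul_div, div_le_iff₀' (pow_pos hmpos 2)]
  exact hFK w hw

end LowerBound

section Gluing

lemma hasDerivAt_indicator {s : Set ℝ} {f f' : ℝ → ℝ} {x : ℝ} (hf : HasDerivAt f (f' x) x)
    (hx0 : x ∈ frontier s → f x = 0 ∧ f' x = 0) :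
    HasDerivAt (s.indicator f) (s.indicator f' x) x := by
  by_cases hx : x ∈ frontier s
  · obtain ⟨hfx, hf'x⟩ := hx0 hx
    have hind : ∀ g : ℝ → ℝ, g x = 0 → s.indicator g x = 0 := fun g hg => by simp [hg]
    rw [hind f' hf'x, hasDerivAt_iff_isLittleO]
    rw [hf'x, hasDerivAt_iff_isLittleO] at hf
    simp only [hfx, hind f hfx, smul_zero, sub_zero] at hf ⊢
    exact (Asymptotics.isBigO_of_le _ fun y => norm_indicator_le_norm_self f y).trans_isLittleO hf
  · by_cases hxs : x ∈ closure s
    · have hs : s ∈ nhds x := mem_interior_iff_mem_nhds.1 (by_contra fun h => hx ⟨hxs, h⟩)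
      rw [indicator_of_mem (mem_of_mem_nhds hs)]
      refine hf.congr_of_eventuallyEq ?_
      filter_upwards [hs] with y hy using indicator_of_mem hy f
    · rw [indicator_of_notMem fun h => hxs (subset_closure h)]
      refine (hasDerivAt_const x (0 : ℝ)).congr_of_eventuallyEq ?_
      filter_upwards [isClosed_closure.isOpen_compl.mem_nhds hxs] with y hy
      exact indicator_of_notMem (fun h => hy (subset_closure h)) f

lemma deriv_indicator {s : Set ℝ} {f : ℝ → ℝ} (hf : Differentiable ℝ f)
    (hs : ∀ x ∈ frontier s, f x = 0 ∧ deriv f x = 0) :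
    deriv (s.indicator f) = s.indicator (deriv f) :=
  funext fun x => (hasDerivAt_indicator (hf x).hasDerivAt (hs x)).deriv

lemma contDiff_one_indicator {s : Set ℝ} {f : ℝ → ℝ} (hf : ContDiff ℝ 1 f)
    (hs : ∀ x ∈ frontier s, f x = 0 ∧ deriv f x = 0) : ContDiff ℝ 1 (s.indicator f) := by
  have hfd := hf.differentiable one_ne_zero
  refine contDiff_one_iff_deriv.2
    ⟨fun x => (hasDerivAt_indicator (hfd x).hasDerivAt (hs x)).differentiableAt, ?_⟩
  rw [deriv_indicator hfd hs]
  exact (hf.continuous_deriv le_rfl).indicator fun x hx => (hs x hx).2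

lemma contDiff_comp_toIcoMod {w : ℝ → ℝ} {a T : ℝ} {n : WithTop ℕ∞} (hT : 0 < T)
    (hw : ContDiff ℝ n w) (hsupp : ∀ x ∉ Ioo a (a + T), w x = 0) :
    ContDiff ℝ n (w ∘ toIcoMod hT a) := by
  have hlocal : ∀ x ∈ Ioo (a - T) (a + T), (w ∘ toIcoMod hT a) x = w x + w (x + T) := by
    intro x hx
    rcases le_or_gt a x with h | h
    · rw [Function.comp_apply, (toIcoMod_eq_self hT).2 ⟨h, hx.2⟩,
        hsupp (x + T) fun h' => by linarith [h'.2], add_zero]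
    · rw [Function.comp_apply, ← toIcoMod_add_right,
        (toIcoMod_eq_self hT).2 ⟨by linarith [hx.1], by linarith⟩,
        hsupp x fun h' => h.not_gt h'.1, zero_add]
  have hperiod : ∀ x ∈ Ico a (a + T), ContDiffAt ℝ n (w ∘ toIcoMod hT a) x := fun x hx => by
    refine ContDiffAt.congr_of_eventuallyEq (f := fun y => w y + w (y + T)) (by fun_prop) ?_
    have hx' : x ∈ Ioo (a - T) (a + T) := ⟨by linarith [hx.1], hx.2⟩
    filter_upwards [isOpen_Ioo.mem_nhds hx'] with y hy using hlocal y hy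
  refine contDiff_iff_contDiffAt.2 fun x => ?_
  have hx := hperiod _ (toIcoMod_mem_Ico hT a x)
  rw [← self_sub_toIcoDiv_zsmul] at hx
  rw [show w ∘ toIcoMod hT a = fun y => (w ∘ toIcoMod hT a) (y - toIcoDiv hT a x • T) from
    funext fun y => (((toIcoMod_periodic hT a).comp w).sub_zsmul_eq _).symm]
  exact ContDiffAt.comp (g := w ∘ toIcoMod hT a) x hx (contDiffAt_id.sub contDiffAt_const)

lemma integral_indicator_Ioo {a b c : ℝ} (hab : a ≤ b) (hbc : b ≤ c) (g : ℝ → ℝ) :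
    ∫ x in a..c, (Ioo a b).indicator g x = ∫ x in a..b, g x := by
  rw [intervalIntegral.integral_of_le (hab.trans hbc), setIntegral_indicator measurableSet_Ioo,
    inter_eq_self_of_subset_right (Ioo_subset_Ioc_self.trans (Ioc_subset_Ioc_right hbc)),
    ← integral_Ioc_eq_integral_Ioo, intervalIntegral.integral_of_le hab]

lemma integral_sq_eq_of_eqOn_indicator {u g : ℝ → ℝ} {a b T : ℝ} (hu : Function.Periodic u T)
    (hab : a ≤ b) (hb : b ≤ a + T) (hug : EqOn u ((Ioo a b).indicator g) (Ioo a (a + T))) :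
    ∫ θ in (0 : ℝ)..T, u θ ^ 2 = ∫ x in a..b, g x ^ 2 := by
  rw [integral_sq_eq_of_periodic hu a, ← integral_indicator_Ioo hab hb]
  refine intervalIntegral.integral_congr_Ioo_of_le (hab.trans hb) fun x hx => ?_
  simp only [hug hx, indicator_apply, ite_pow, zero_pow two_ne_zero]

end Gluing

section Arc

/-- The arc `(a, b)` of the circle, as a `2π`-periodic subset of `ℝ`. -/
def periodicArc (a b : ℝ) : Set ℝ :=
  {θ : ℝ | ∃ k : ℤ, θ - 2 * Real.pi * k ∈ Ioo a b}

variable {a b : ℝ}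

lemma mem_Ioo_of_mem_periodicArc (hb : b ≤ a + 2 * Real.pi) {θ : ℝ}
    (hθ : θ ∈ Icc a (a + 2 * Real.pi)) (hθ' : θ ∈ periodicArc a b) : θ ∈ Ioo a b := by
  obtain ⟨k, hk⟩ := hθ'
  have hπ := Real.pi_pos
  have hk_lt : (k : ℝ) < 1 := by nlinarith [hk.1, hθ.2]
  have hlt_k : (-1 : ℝ) < k := by nlinarith [hk.2, hθ.1]
  obtain rfl : k = 0 := by
    have : k < 1 := by exact_mod_cast hk_lt
    have : -1 < k := by exact_mod_cast hlt_k
    lia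
  simpa using hk

lemma mem_periodicArc_of_toIcoMod_mem {θ : ℝ} (h : toIcoMod Real.two_pi_pos a θ ∈ Ioo a b) :
    θ ∈ periodicArc a b :=
  ⟨toIcoDiv Real.two_pi_pos a θ, by
    rwa [← self_sub_toIcoDiv_zsmul, zsmul_eq_mul, mul_comm] at h⟩

lemma exists_isDirichletTest_periodicArc (hab : a < b) (hb : b ≤ a + 2 * Real.pi) {f : ℝ → ℝ}
    (hf : ContDiff ℝ 1 f) (hfab : ∀ x ∈ ({a, b} : Set ℝ), f x = 0 ∧ deriv f x = 0) :
    ∃ v, IsDirichletTest (periodicArc a b) v ∧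
      (∫ θ in (0 : ℝ)..(2 * Real.pi), v θ ^ 2 = ∫ x in a..b, f x ^ 2) ∧
      ∫ θ in (0 : ℝ)..(2 * Real.pi), deriv v θ ^ 2 = ∫ x in a..b, deriv f x ^ 2 := by
  have h2π := Real.two_pi_pos
  rw [← frontier_Ioo hab] at hfab
  set v := (Ioo a b).indicator f ∘ toIcoMod h2π a
  have hper : Function.Periodic v (2 * Real.pi) := (toIcoMod_periodic h2π a).comp _
  have hv_eq : EqOn v ((Ioo a b).indicator f) (Ioo a (a + 2 * Real.pi)) := fun x hx =>
    congrArg ((Ioo a b).indicator f) ((toIcoMod_eq_self h2π).2 (Ioo_subset_Ico_self hx))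
  have hv'_eq : EqOn (deriv v) ((Ioo a b).indicator (deriv f)) (Ioo a (a + 2 * Real.pi)) := by
    rw [← deriv_indicator (hf.differentiable one_ne_zero) hfab]
    exact hv_eq.deriv isOpen_Ioo
  refine ⟨v, ⟨contDiff_comp_toIcoMod h2π (contDiff_one_indicator hf hfab) fun x hx => ?_, hper,
      fun θ hθ => ?_⟩, integral_sq_eq_of_eqOn_indicator hper hab.le hb hv_eq,
    integral_sq_eq_of_eqOn_indicator (periodic_deriv hper) hab.le hb hv'_eq⟩
  · exact indicator_of_notMem (fun h => hx ⟨h.1, h.2.trans_le hb⟩) f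
  · exact indicator_of_notMem (fun h => hθ (mem_periodicArc_of_toIcoMod_mem h)) f

end Arc

section SinPower

/-- The `p`-th power of the first Dirichlet eigenfunction `sin (π (x - a) / (b - a))` of the
interval `(a, b)`. For `p > 1` it is `C¹` with vanishing derivative at the endpoints, and as
`p → 1` its Rayleigh quotient tends to the first eigenvalue. The absolute value makes it `C¹` on all
of `ℝ`. -/
def absSinRpow (a b p x : ℝ) : ℝ :=
  |Real.sin (Real.pi / (b - a) * (x - a))| ^ p

variable {a b p : ℝ}

lemma sin_div_mul_sub_pos {x : ℝ} (hx : x ∈ Ioo a b) :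
    0 < Real.sin (Real.pi / (b - a) * (x - a)) := by
  have hL : 0 < b - a := by linarith [hx.1, hx.2]
  have hxa : 0 < x - a := sub_pos.2 hx.1
  refine Real.sin_pos_of_pos_of_lt_pi (by positivity) ?_
  rw [div_mul_eq_mul_div, div_lt_iff₀ hL]
  exact mul_lt_mul_of_pos_left (by linarith [hx.2]) Real.pi_pos

lemma hasDerivAt_sin_div_mul_sub (a b x : ℝ) :
    HasDerivAt (fun x => Real.sin (Real.pi / (b - a) * (x - a)))
      (Real.cos (Real.pi / (b - a) * (x - a)) * (Real.pi / (b - a))) x := by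
  simpa using (((hasDerivAt_id x).sub_const a).const_mul (Real.pi / (b - a))).sin

lemma hasDerivAt_cos_div_mul_sub (a b x : ℝ) :
    HasDerivAt (fun x => Real.cos (Real.pi / (b - a) * (x - a)))
      (-Real.sin (Real.pi / (b - a) * (x - a)) * (Real.pi / (b - a))) x := by
  simpa using (((hasDerivAt_id x).sub_const a).const_mul (Real.pi / (b - a))).cos

lemma contDiff_absSinRpow (a b : ℝ) (hp : 1 < p) : ContDiff ℝ 1 (absSinRpow a b p) :=
  (contDiff_norm_rpow hp).comp (Real.contDiff_sin.comp (by fun_prop))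

lemma hasDerivAt_absSinRpow (a b : ℝ) (hp : 1 < p) (x : ℝ) :
    HasDerivAt (absSinRpow a b p)
      (p * |Real.sin (Real.pi / (b - a) * (x - a))| ^ (p - 2) *
        Real.sin (Real.pi / (b - a) * (x - a)) *
        (Real.cos (Real.pi / (b - a) * (x - a)) * (Real.pi / (b - a)))) x :=
  (hasDerivAt_abs_rpow _ hp).comp x (hasDerivAt_sin_div_mul_sub a b x)

lemma absSinRpow_eq_zero_and_deriv_eq_zero (hp : 1 < p) {x : ℝ}
    (hx : Real.sin (Real.pi / (b - a) * (x - a)) = 0) :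
    absSinRpow a b p x = 0 ∧ deriv (absSinRpow a b p) x = 0 := by
  refine ⟨?_, ?_⟩
  · rw [absSinRpow, hx, abs_zero, Real.zero_rpow (by positivity)]
  · rw [(hasDerivAt_absSinRpow a b hp x).deriv, hx, mul_zero, zero_mul]

lemma hasDerivAt_sin_rpow_mul_cos (hp : 1 < p) {x : ℝ} (hx : x ∈ Ioo a b) :
    HasDerivAt (fun x => p ^ 2 * (Real.pi / (b - a)) *
        (Real.sin (Real.pi / (b - a) * (x - a)) ^ (2 * p - 1) *
          Real.cos (Real.pi / (b - a) * (x - a))))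
      ((2 * p - 1) * deriv (absSinRpow a b p) x ^ 2 -
        (p * (Real.pi / (b - a))) ^ 2 * absSinRpow a b p x ^ 2) x := by
  set κ := Real.pi / (b - a) with hκ
  have hsin : 0 < Real.sin (κ * (x - a)) := sin_div_mul_sub_pos hx
  refine ((((hasDerivAt_sin_div_mul_sub a b x).rpow_const (Or.inl hsin.ne')).mul
    (hasDerivAt_cos_div_mul_sub a b x)).const_mul (p ^ 2 * κ)).congr_deriv ?_
  rw [(hasDerivAt_absSinRpow a b hp x).deriv, absSinRpow, ← hκ, abs_of_pos hsin]
  set s := Real.sin (κ * (x - a))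
  have hpow : ∀ (q : ℝ) (m n : ℕ), q = m * (p - 2) + n → s ^ q = (s ^ (p - 2)) ^ m * s ^ n := by
    rintro q m n rfl
    rw [Real.rpow_add_natCast hsin.ne', mul_comm (m : ℝ), Real.rpow_mul_natCast hsin.le]
  rw [hpow p 1 2 (by push_cast; ring), hpow (2 * p - 1) 2 3 (by push_cast; ring),
    hpow (2 * p - 1 - 1) 2 2 (by push_cast; ring)]
  ring

lemma integral_deriv_absSinRpow_sq (hab : a < b) (hp : 1 < p) :
    (2 * p - 1) * ∫ x in a..b, deriv (absSinRpow a b p) x ^ 2 =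
      (p * (Real.pi / (b - a))) ^ 2 * ∫ x in a..b, absSinRpow a b p x ^ 2 := by
  have hf := contDiff_absSinRpow a b hp
  have hL : b - a ≠ 0 := by linarith
  have hp' : 0 < 2 * p - 1 := by linarith
  have hint : ∀ c : ℝ, ∀ g : ℝ → ℝ, Continuous g →
      IntervalIntegrable (fun x => c * g x ^ 2) volume a b := fun c g hg =>
    ((hg.pow 2).const_mul c).intervalIntegrable _ _
  have hint₁ := hint (2 * p - 1) _ (hf.continuous_deriv le_rfl)
  have hint₂ := hint ((p * (Real.pi / (b - a))) ^ 2) _ hf.continuous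
  have hcont : Continuous fun x => p ^ 2 * (Real.pi / (b - a)) *
      (Real.sin (Real.pi / (b - a) * (x - a)) ^ (2 * p - 1) *
        Real.cos (Real.pi / (b - a) * (x - a))) := by
    have : Continuous fun x => Real.sin (Real.pi / (b - a) * (x - a)) ^ (2 * p - 1) :=
      Continuous.rpow_const (by fun_prop) fun _ => Or.inr hp'.le
    fun_prop
  have hFTC := intervalIntegral.integral_eq_sub_of_hasDerivAt_of_le hab.le hcont.continuousOn
    (fun x hx => hasDerivAt_sin_rpow_mul_cos hp hx) (hint₁.sub hint₂)
  rw [intervalIntegral.integral_sub hint₁ hint₂, intervalIntegral.integral_const_mul,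
    intervalIntegral.integral_const_mul, div_mul_cancel₀ _ hL, sub_self, mul_zero, Real.sin_zero,
    Real.sin_pi, Real.zero_rpow hp'.ne', zero_mul, zero_mul, sub_self] at hFTC
  exact sub_eq_zero.1 hFTC

lemma integral_absSinRpow_sq_pos (hab : a < b) (hp : 1 < p) :
    0 < ∫ x in a..b, absSinRpow a b p x ^ 2 :=
  intervalIntegral.intervalIntegral_pos_of_pos_on
    (((contDiff_absSinRpow a b hp).continuous.pow 2).intervalIntegrable _ _)
    (fun _ hx => pow_pos (Real.rpow_pos_of_pos (abs_pos.2 (sin_div_mul_sub_pos hx).ne') p) 2)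
    hab

end SinPower

section Eigenvalue

variable {Γ : Set ℝ} {a b : ℝ}

lemma exists_isDirichletTest_rayleighQuotient_eq (hab : a < b) (hb : b ≤ a + 2 * Real.pi) {p : ℝ}
    (hp : 1 < p) :
    ∃ v, IsDirichletTest (periodicArc a b) v ∧ ∫ θ in (0 : ℝ)..(2 * Real.pi), v θ ^ 2 ≠ 0 ∧
      rayleighQuotient v = p ^ 2 / (2 * p - 1) * (Real.pi / (b - a)) ^ 2 := by
  have hL : b - a ≠ 0 := by linarith
  have hsin : ∀ x ∈ ({a, b} : Set ℝ), Real.sin (Real.pi / (b - a) * (x - a)) = 0 := by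
    rintro x (rfl | rfl)
    · rw [sub_self, mul_zero, Real.sin_zero]
    · rw [div_mul_cancel₀ _ hL, Real.sin_pi]
  obtain ⟨v, hv, hv_sq, hv'_sq⟩ := exists_isDirichletTest_periodicArc hab hb
    (contDiff_absSinRpow a b hp) fun x hx => absSinRpow_eq_zero_and_deriv_eq_zero hp (hsin x hx)
  have hpos := integral_absSinRpow_sq_pos hab hp
  refine ⟨v, hv, hv_sq ▸ hpos.ne', ?_⟩
  have hp' : 2 * p - 1 ≠ 0 := by linarith
  rw [rayleighQuotient, hv_sq, hv'_sq, div_eq_iff hpos.ne', div_mul_eq_mul_div, ← mul_pow,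
    div_mul_eq_mul_div, eq_div_iff hp', mul_comm, integral_deriv_absSinRpow_sq hab hp]

lemma exists_isDirichletTest_of_isOpen (hopen : IsOpen Γ)
    (hper : Function.Periodic (· ∈ Γ) (2 * Real.pi)) (hne : Γ.Nonempty) :
    ∃ v, IsDirichletTest Γ v ∧ ∫ θ in (0 : ℝ)..(2 * Real.pi), v θ ^ 2 ≠ 0 := by
  obtain ⟨x, hx⟩ := hne
  obtain ⟨y, hxy, hy⟩ := mem_nhdsGE_iff_exists_Ico_subset.1
    (mem_nhdsWithin_of_mem_nhds (hopen.mem_nhds hx))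
  have hx_lt : x < min y (x + 2 * Real.pi) := lt_min hxy (by linarith [Real.two_pi_pos])
  obtain ⟨v, hv, hv0, -⟩ := exists_isDirichletTest_rayleighQuotient_eq hx_lt (min_le_right _ _)
    one_lt_two
  refine ⟨v, hv.mono ?_, hv0⟩
  rintro θ ⟨k, hk⟩
  have hθ : θ - k * (2 * Real.pi) ∈ Γ :=
    hy ⟨by linarith [hk.1], by linarith [hk.2, min_le_left y (x + 2 * Real.pi)]⟩
  exact (hper.sub_int_mul_eq k).mp hθ

lemma circEigen_periodicArc_le (hab : a < b) (hb : b ≤ a + 2 * Real.pi) :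
    circEigen (periodicArc a b) ≤ (Real.pi / (b - a)) ^ 2 := by
  have hlim : Filter.Tendsto (fun p : ℝ => p ^ 2 / (2 * p - 1) * (Real.pi / (b - a)) ^ 2)
      (nhdsWithin 1 (Ioi 1)) (nhds ((Real.pi / (b - a)) ^ 2)) := by
    have hcont : ContinuousAt (fun p : ℝ => p ^ 2 / (2 * p - 1) * (Real.pi / (b - a)) ^ 2) 1 :=
      ContinuousAt.mul (ContinuousAt.div (by fun_prop) (by fun_prop) (by norm_num)) (by fun_prop)
    convert hcont.tendsto.mono_left nhdsWithin_le_nhds using 2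
    norm_num
  refine ge_of_tendsto hlim ?_
  filter_upwards [self_mem_nhdsWithin] with p hp
  obtain ⟨v, hv, hv0, hvp⟩ := exists_isDirichletTest_rayleighQuotient_eq hab hb hp
  exact hvp ▸ circEigen_le_rayleighQuotient hv hv0

theorem sqrt_circEigen_periodicArc (hab : a < b) (hb : b ≤ a + 2 * Real.pi) :
    Real.sqrt (circEigen (periodicArc a b)) = Real.pi / (b - a) := by
  have hL : 0 < b - a := sub_pos.2 hab
  refine le_antisymm (Real.sqrt_le_iff.2 ⟨by positivity, circEigen_periodicArc_le hab hb⟩) ?_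
  obtain ⟨v, hv, hv0, -⟩ := exists_isDirichletTest_rayleighQuotient_eq hab hb one_lt_two
  have ha : a ∉ periodicArc a b := fun h =>
    left_notMem_Ioo (mem_Ioo_of_mem_periodicArc hb (left_mem_Icc.2 (hab.le.trans hb)) h)
  have hvol : volume.real (periodicArc a b ∩ Ioc a (a + 2 * Real.pi)) ≤ b - a := by
    rw [← Real.volume_real_Ioo_of_le hab.le]
    exact measureReal_mono (fun θ hθ =>
      mem_Ioo_of_mem_periodicArc hb (Ioc_subset_Icc_self hθ.2) hθ.1) measure_Ioo_lt_top.ne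
  rw [div_le_iff₀ hL]
  exact (pi_le_sqrt_circEigen_mul_volume hv hv0 ha a).trans
    (mul_le_mul_of_nonneg_left hvol (Real.sqrt_nonneg _))

end Eigenvalue

section DisjointSets

lemma volume_real_inter_Ioc_add_le {s t : Set ℝ} (hs : MeasurableSet s) (hst : Disjoint s t)
    {a b : ℝ} (hab : a ≤ b) :
    volume.real (s ∩ Ioc a b) + volume.real (t ∩ Ioc a b) ≤ b - a := by
  rw [← measureReal_union' (hst.mono inter_subset_left inter_subset_left)
      (hs.inter measurableSet_Ioc) (volume_inter_Ioc_ne_top _ _ _) (volume_inter_Ioc_ne_top _ _ _),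
    ← union_inter_distrib_right, ← Real.volume_real_Ioc_of_le hab]
  exact measureReal_mono inter_subset_right measure_Ioc_lt_top.ne

lemma four_mul_le_add_mul_add {c s t m n : ℝ} (hc : 0 ≤ c) (hs : 0 ≤ s) (ht : 0 ≤ t)
    (hm : 0 ≤ m) (hn : 0 ≤ n) (hsm : c ≤ s * m) (htn : c ≤ t * n) :
    4 * c ≤ (s + t) * (m + n) := by
  have hcross : 2 * c ≤ s * n + t * m := by
    refine (sq_le_sq₀ (by positivity) (by positivity)).1 ?_
    calc (2 * c) ^ 2 = 4 * (c * c) := by ring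
      _ ≤ 4 * (s * m * (t * n)) := by gcongr
      _ = 4 * (s * n) * (t * m) := by ring
      _ ≤ (s * n + t * m) ^ 2 := four_mul_le_sq_add _ _
  linarith [add_mul s t (m + n), mul_add s m n, mul_add t m n]

theorem two_le_sqrt_circEigen_add_sqrt_circEigen {Γ₁ Γ₂ : Set ℝ} (hopen₁ : IsOpen Γ₁)
    (hopen₂ : IsOpen Γ₂) (hper₁ : Function.Periodic (· ∈ Γ₁) (2 * Real.pi))
    (hper₂ : Function.Periodic (· ∈ Γ₂) (2 * Real.pi)) (hne₁ : Γ₁.Nonempty) (hne₂ : Γ₂.Nonempty)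
    (hdisj : Disjoint Γ₁ Γ₂) :
    2 ≤ Real.sqrt (circEigen Γ₁) + Real.sqrt (circEigen Γ₂) := by
  obtain ⟨v₁, hv₁, hv₁0⟩ := exists_isDirichletTest_of_isOpen hopen₁ hper₁ hne₁
  obtain ⟨v₂, hv₂, hv₂0⟩ := exists_isDirichletTest_of_isOpen hopen₂ hper₂ hne₂
  obtain ⟨c₁, hc₁⟩ := hne₁
  obtain ⟨c₂, hc₂⟩ := hne₂
  have h2π := Real.two_pi_pos
  have hvol := volume_real_inter_Ioc_add_le hopen₁.measurableSet hdisj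
    (le_add_of_nonneg_right (a := (0 : ℝ)) h2π.le)
  have hprod : 4 * Real.pi ≤
      (Real.sqrt (circEigen Γ₁) + Real.sqrt (circEigen Γ₂)) * (2 * Real.pi) := calc
    4 * Real.pi ≤ (Real.sqrt (circEigen Γ₁) + Real.sqrt (circEigen Γ₂)) *
        (volume.real (Γ₁ ∩ Ioc 0 (0 + 2 * Real.pi)) +
          volume.real (Γ₂ ∩ Ioc 0 (0 + 2 * Real.pi))) :=
        four_mul_le_add_mul_add Real.pi_pos.le (Real.sqrt_nonneg _) (Real.sqrt_nonneg _)
          measureReal_nonneg measureReal_nonneg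
          (pi_le_sqrt_circEigen_mul_volume hv₁ hv₁0 (hdisj.notMem_of_mem_right hc₂) 0)
          (pi_le_sqrt_circEigen_mul_volume hv₂ hv₂0 (hdisj.notMem_of_mem_left hc₁) 0)
    _ ≤ (Real.sqrt (circEigen Γ₁) + Real.sqrt (circEigen Γ₂)) * (2 * Real.pi) := by
        gcongr
        simpa only [add_sub_cancel_left] using hvol
  exact le_of_mul_le_mul_right (by linarith) h2π

lemma sqrt_circEigen_complementary_arcs {α : ℝ} (hα0 : 0 < α) (hα1 : α < 1) :
    Real.sqrt (circEigen (periodicArc 0 (2 * Real.pi * α))) +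
      Real.sqrt (circEigen (periodicArc (2 * Real.pi * α) (2 * Real.pi))) =
        1 / (2 * α) + 1 / (2 * (1 - α)) := by
  have h2π := Real.two_pi_pos
  have h0α : 0 < 2 * Real.pi * α := mul_pos h2π hα0
  have hα2π : 2 * Real.pi * α < 2 * Real.pi := mul_lt_of_lt_one_right h2π hα1
  have hα1' : 1 - α ≠ 0 := by linarith
  rw [sqrt_circEigen_periodicArc h0α (by linarith),
    sqrt_circEigen_periodicArc hα2π (by linarith), sub_zero,
    show 2 * Real.pi - 2 * Real.pi * α = 2 * Real.pi * (1 - α) by ring]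
  field_simp

end DisjointSets

/-- Spectral inequality for disjoint subsets of the circle: `√μ₁ + √μ₂ ≥ 2`, with the minimum
attained for two adjacent complementary arcs of lengths `2πα` and `2π(1-α)`, for which the sum
equals `1/(2α) + 1/(2(1-α)) ≥ 2`. Subsets of the circle are modelled as `2π`-periodic
subsets of `ℝ`. -/
theorem stmt_18 (Γ₁ Γ₂ : Set ℝ)
    (hopen₁ : IsOpen Γ₁) (hopen₂ : IsOpen Γ₂)
    (hper₁ : ∀ θ, θ ∈ Γ₁ ↔ θ + 2 * Real.pi ∈ Γ₁)
    (hper₂ : ∀ θ, θ ∈ Γ₂ ↔ θ + 2 * Real.pi ∈ Γ₂)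
    (hne₁ : Γ₁.Nonempty) (hne₂ : Γ₂.Nonempty)
    (hdisj : Disjoint Γ₁ Γ₂)
    (hproper₁ : Γ₁ ≠ Set.univ) (hproper₂ : Γ₂ ≠ Set.univ) :
    2 ≤ Real.sqrt (circEigen Γ₁) + Real.sqrt (circEigen Γ₂) ∧
    ∀ α : ℝ, 0 < α → α < 1 →
      Γ₁ = {θ : ℝ | ∃ k : ℤ, θ - 2 * Real.pi * k ∈ Set.Ioo 0 (2 * Real.pi * α)} →
      Γ₂ = {θ : ℝ | ∃ k : ℤ, θ - 2 * Real.pi * k ∈ Set.Ioo (2 * Real.pi * α) (2 * Real.pi)} →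
      Real.sqrt (circEigen Γ₁) + Real.sqrt (circEigen Γ₂) =
        1 / (2 * α) + 1 / (2 * (1 - α)) ∧
      2 ≤ 1 / (2 * α) + 1 / (2 * (1 - α)) := by
  have hlow := two_le_sqrt_circEigen_add_sqrt_circEigen hopen₁ hopen₂
    (fun θ => propext (hper₁ θ).symm) (fun θ => propext (hper₂ θ).symm) hne₁ hne₂ hdisj
  refine ⟨hlow, fun α hα0 hα1 hΓ₁ hΓ₂ => ?_⟩
  have hsum : Real.sqrt (circEigen Γ₁) + Real.sqrt (circEigen Γ₂) =
      1 / (2 * α) + 1 / (2 * (1 - α)) :=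
    hΓ₁ ▸ hΓ₂ ▸ sqrt_circEigen_complementary_arcs hα0 hα1
  exact ⟨hsum, hsum ▸ hlow⟩
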